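/- arXiv:2508.16986 — 5 statements merged into one kernel-verified Lean document; each statement's English description precedes it below -/
import Mathlib

section
/- Let F = (A, R) be a finitary argumentation framework, let C be an infinite index set, and for each b ∈ C let X_b be a finite admissible extension of F such that for all distinct b, b' ∈ C some element of X_b attacks some element of X_{b'}. Suppose S ⊆ A is such that the set {b ∈ C : S ⊆ X_b} is infinite. Then there exists an argument x ∉ S such that the set {b ∈ C : S ∪ {x} ⊆ X_b} is infinite. -/
namespace AF

variable {α : Type*}

/-- `S` is conflict-free: no argument in `S` attacks another argument in `S`. -/
def ConflictFree (R : α → α → Prop) (S : Set α) : Prop :=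
  ∀ a ∈ S, ∀ b ∈ S, ¬ R a b

/-- `S` defends the argument `a`: every attacker of `a` is attacked by some element of `S`. -/
def Defends (R : α → α → Prop) (S : Set α) (a : α) : Prop :=
  ∀ x, R x a → ∃ y ∈ S, R y x

/-- `S` is admissible: conflict-free and defends each of its elements. -/
def Admissible (R : α → α → Prop) (S : Set α) : Prop :=
  ConflictFree R S ∧ ∀ a ∈ S, Defends R S a

/-- `S` is stable: conflict-free and attacks every argument outside of `S`. -/
def Stable (R : α → α → Prop) (S : Set α) : Prop :=
  ConflictFree R S ∧ ∀ a, a ∉ S → ∃ b ∈ S, R b a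

/-- `S` is complete: conflict-free and equal to the set of arguments it defends. -/
def Complete (R : α → α → Prop) (S : Set α) : Prop :=
  ConflictFree R S ∧ S = {a | Defends R S a}

/-- `S` is naive: conflict-free and no proper superset of `S` is conflict-free. -/
def Naive (R : α → α → Prop) (S : Set α) : Prop :=
  ConflictFree R S ∧ ∀ T : Set α, S ⊆ T → ConflictFree R T → T = S

/-- The framework is finitary: each argument has only finitely many attackers. -/
def Finitary (R : α → α → Prop) : Prop :=
  ∀ a : α, {x : α | R x a}.Finite

/-- The set of arguments attacking some member of `T`. In a finitary framework it is finite whenever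
`T` is, so it can serve as the set of pigeonholes. -/
def attackers (R : α → α → Prop) (T : Set α) : Set α :=
  {x | ∃ y ∈ T, R x y}

theorem Finitary.finite_attackers {R : α → α → Prop} (hR : Finitary R) {T : Set α}
    (hT : T.Finite) : (attackers R T).Finite := by
  have attackers_eq_biUnion : attackers R T = ⋃ y ∈ T, {x | R x y} := by
    ext x
    simp [attackers]
  rw [attackers_eq_biUnion]
  exact hT.biUnion fun y _ => hR y

theorem ConflictFree.disjoint_attackers {R : α → α → Prop} {T : Set α}
    (hT : ConflictFree R T) : Disjoint T (attackers R T) :=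
  Set.disjoint_left.mpr fun x hx ⟨y, hy, hxy⟩ => hT x hx y hy hxy

theorem exists_mem_infinite_of_forall_inter_nonempty {ι : Type*} {X : ι → Set α}
    {I : Set ι} (hI : I.Infinite) {F : Set α} (hF : F.Finite)
    (hXF : ∀ b ∈ I, (X b ∩ F).Nonempty) :
    ∃ x ∈ F, {b ∈ I | x ∈ X b}.Infinite := by
  by_contra! h
  refine hI ((hF.biUnion h).subset fun b hb => ?_)
  obtain ⟨x, hxX, hxF⟩ := hXF b hb
  exact Set.mem_biUnion hxF ⟨hb, hxX⟩

/-- All but at most one of the infinitely many `X b ⊇ S` contain one of the finitely many attackers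
of `X b₀`, so infinitely many share one; it is not in `S` because `X b₀ ⊇ S` is conflict-free. -/
theorem add_an_element_general {ι : Type*} {R : α → α → Prop} {C : Set ι} {X : ι → Set α}
    {S : Set α} {b₀ : ι} (hcf : ConflictFree R (X b₀)) (hfin : (attackers R (X b₀)).Finite)
    (hatt : ∀ b ∈ C, b ≠ b₀ → ∃ x ∈ X b, ∃ y ∈ X b₀, R x y)
    (hS₀ : S ⊆ X b₀) (hS : {b ∈ C | S ⊆ X b}.Infinite) :
    ∃ x ∉ S, {b ∈ C | S ∪ {x} ⊆ X b}.Infinite := by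
  have hI : ({b ∈ C | S ⊆ X b} \ {b₀}).Infinite := hS.sdiff (Set.finite_singleton b₀)
  have hmeet : ∀ b ∈ {b ∈ C | S ⊆ X b} \ {b₀}, (X b ∩ attackers R (X b₀)).Nonempty :=
    fun b hb => hatt b hb.1.1 hb.2
  obtain ⟨x, hx, hinf⟩ := exists_mem_infinite_of_forall_inter_nonempty hI hfin hmeet
  have hxS : x ∉ S := fun h => hcf.disjoint_attackers.notMem_of_mem_left (hS₀ h) hx
  refine ⟨x, hxS, hinf.mono ?_⟩
  rintro b ⟨⟨⟨hbC, hSb⟩, -⟩, hxb⟩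
  exact ⟨hbC, Set.union_subset hSb (Set.singleton_subset_iff.mpr hxb)⟩

theorem add_an_element {ι : Type*}
    (R : α → α → Prop) (hfin : Finitary R)
    (C : Set ι) (hC : C.Infinite) (X : ι → Set α)
    (hXfin : ∀ b ∈ C, (X b).Finite)
    (hXadm : ∀ b ∈ C, Admissible R (X b))
    (hatt : ∀ b ∈ C, ∀ b' ∈ C, b ≠ b' → ∃ x ∈ X b, ∃ y ∈ X b', R x y)
    (S : Set α) (hS : {b ∈ C | S ⊆ X b}.Infinite) :
    ∃ x ∉ S, {b ∈ C | S ∪ {x} ⊆ X b}.Infinite := by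
  obtain ⟨b₀, hb₀, hS₀⟩ := hS.nonempty
  exact add_an_element_general (hXadm b₀ hb₀).1 (hfin.finite_attackers (hXfin b₀ hb₀))
    (fun b hb => hatt b hb b₀ hb₀) hS₀ hS

end AF
end

section
/- Let F = (A, R) be a finitary argumentation framework. Then F has an infinite admissible extension if and only if for every natural number n there exists an admissible extension of F containing at least n arguments. -/
namespace AF

variable {α : Type*}

/-!
Take admissible sets `T n` with `n ≤ |T n|` and a nonprincipal ultrafilter `U` on `ℕ`. Since `R` is
finitary, the set `L` of arguments lying in `U`-almost all `T n` is admissible; extend it to a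
maximal admissible set `M`. If `M` were finite, it would have only finitely many attackers, and none
of them lies in `L ⊆ M`, so `U`-almost all `T n` contain no attacker of `M`. Two admissible sets of
which one does not attack the other have an admissible union, so `T n ⊆ M` for `U`-almost all `n`
by maximality, which is absurd once `n > |M|`.
-/

open Filter

section

variable {ι : Type*} {R : α → α → Prop} {S T M : Set α} {a : α}

theorem Defends.mono (h : Defends R S a) (hST : S ⊆ T) : Defends R T a := fun x hx =>
  let ⟨y, hy, hyx⟩ := h x hx
  ⟨y, hST hy, hyx⟩

theorem not_attacks_of_forall_defends (hT : ∀ b ∈ T, Defends R T b)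
    (hTS : ∀ a ∈ T, ∀ b ∈ S, ¬ R a b) : ∀ a ∈ S, ∀ b ∈ T, ¬ R a b := fun a ha b hb hab =>
  let ⟨y, hy, hya⟩ := hT b hb a hab
  hTS y hy a ha hya

theorem Admissible.union (hS : Admissible R S) (hT : Admissible R T)
    (hTS : ∀ a ∈ T, ∀ b ∈ S, ¬ R a b) : Admissible R (S ∪ T) := by
  have hST : ∀ a ∈ S, ∀ b ∈ T, ¬ R a b := not_attacks_of_forall_defends hT.2 hTS
  constructor
  · rintro a (ha | ha) b (hb | hb)
    · exact hS.1 a ha b hb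
    · exact hST a ha b hb
    · exact hTS a ha b hb
    · exact hT.1 a ha b hb
  · rintro a (ha | ha)
    · exact (hS.2 a ha).mono Set.subset_union_left
    · exact (hT.2 a ha).mono Set.subset_union_right

theorem admissible_sUnion_of_directedOn {c : Set (Set α)} (hc : DirectedOn (· ⊆ ·) c)
    (hadm : ∀ S ∈ c, Admissible R S) : Admissible R (⋃₀ c) := by
  constructor
  · rintro a ⟨S, hS, ha⟩ b ⟨T, hT, hb⟩
    obtain ⟨V, hV, hSV, hTV⟩ := hc S hS T hT
    exact (hadm V hV).1 a (hSV ha) b (hTV hb)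
  · rintro a ⟨S, hS, ha⟩
    exact ((hadm S hS).2 a ha).mono (Set.subset_sUnion_of_mem hS)

theorem Admissible.exists_maximal_superset (hS : Admissible R S) :
    ∃ M, S ⊆ M ∧ Maximal (Admissible R) M :=
  zorn_subset_nonempty {S | Admissible R S}
    (fun c hc hchain _ => ⟨⋃₀ c, admissible_sUnion_of_directedOn hchain.directedOn hc,
      fun _ => Set.subset_sUnion_of_mem⟩) S hS

theorem conflictFree_liminf {f : Filter ι} [f.NeBot] {T : ι → Set α}
    (hT : ∀ᶠ i in f, ConflictFree R (T i)) : ConflictFree R (liminf T f) := by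
  intro a ha b hb hab
  rw [mem_liminf_iff_eventually_mem] at ha hb
  obtain ⟨i, hi, hai, hbi⟩ := (hT.and (ha.and hb)).exists
  exact hi a hai b hbi hab

theorem Finitary.defends_liminf (hfin : Finitary R) {U : Ultrafilter ι} {T : ι → Set α}
    (hT : ∀ᶠ i in U, Defends R (T i) a) : Defends R (liminf T U) a := by
  intro x hx
  have hcounter : ∀ᶠ i in U, ∃ y ∈ {y | R y x}, y ∈ T i := by
    filter_upwards [hT] with i hi
    obtain ⟨y, hy, hyx⟩ := hi x hx
    exact ⟨y, hyx, hy⟩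
  obtain ⟨y, hyx, hy⟩ := (Ultrafilter.eventually_exists_mem_iff (hfin x)).1 hcounter
  exact ⟨y, mem_liminf_iff_eventually_mem.2 hy, hyx⟩

theorem Finitary.admissible_liminf (hfin : Finitary R) {U : Ultrafilter ι} {T : ι → Set α}
    (hT : ∀ᶠ i in U, Admissible R (T i)) : Admissible R (liminf T U) := by
  refine ⟨conflictFree_liminf (hT.mono fun _ hi => hi.1), fun a ha => hfin.defends_liminf ?_⟩
  filter_upwards [hT, mem_liminf_iff_eventually_mem.1 ha] with i hi hai
  exact hi.2 a hai

theorem Finitary.finite_attackers_s5 (hfin : Finitary R) (hS : S.Finite) :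
    {a | ∃ b ∈ S, R a b}.Finite :=
  (hS.biUnion fun b _ => hfin b).subset fun _ ⟨_, hb, hab⟩ => Set.mem_biUnion hb hab

theorem eventually_disjoint_of_disjoint_liminf {U : Ultrafilter ι} {T : ι → Set α}
    (hS : S.Finite) (hdisj : Disjoint S (liminf T U)) : ∀ᶠ i in U, Disjoint S (T i) := by
  simp only [Set.disjoint_left, mem_liminf_iff_eventually_mem] at hdisj ⊢
  exact (eventually_all_finite hS).2 fun a ha => Ultrafilter.eventually_not.2 (hdisj ha)

theorem eventually_subset_of_liminf_subset_maximal {U : Ultrafilter ι} {T : ι → Set α}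
    (hT : ∀ᶠ i in U, Admissible R (T i)) (hM : Maximal (Admissible R) M)
    (hfin : {a | ∃ b ∈ M, R a b}.Finite) (hTM : liminf T U ⊆ M) : ∀ᶠ i in U, T i ⊆ M := by
  have hdisj : Disjoint {a | ∃ b ∈ M, R a b} (liminf T U) :=
    Set.disjoint_left.2 fun a ⟨b, hb, hab⟩ ha => hM.prop.1 a (hTM ha) b hb hab
  filter_upwards [hT, eventually_disjoint_of_disjoint_liminf hfin hdisj] with i hi hdisji
  have hunion : Admissible R (M ∪ T i) :=
    hM.prop.union hi fun a ha b hb hab => Set.disjoint_left.1 hdisji ⟨b, hb, hab⟩ ha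
  exact Set.subset_union_right.trans (hM.le_of_ge hunion Set.subset_union_left)

end

theorem exists_infinite_admissible_iff_arbitrarily_large
    (R : α → α → Prop) (hfin : Finitary R) :
    (∃ S : Set α, S.Infinite ∧ Admissible R S) ↔
      ∀ n : ℕ, ∃ S : Set α, Admissible R S ∧ (n : ℕ∞) ≤ S.encard := by
  constructor
  · rintro ⟨S, hinf, hS⟩ n
    exact ⟨S, hS, hinf.encard_eq ▸ le_top⟩
  · intro hlarge
    choose T hT hcard using hlarge
    obtain ⟨M, hTM, hM⟩ := (hfin.admissible_liminf (U := hyperfilter ℕ)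
      (Eventually.of_forall hT)).exists_maximal_superset
    refine ⟨M, fun hMfin => ?_, hM.prop⟩
    have hsub : ∀ᶠ n in hyperfilter ℕ, T n ⊆ M := eventually_subset_of_liminf_subset_maximal
      (Eventually.of_forall hT) hM (hfin.finite_attackers_s5 hMfin) hTM
    have hgt : ∀ᶠ n in hyperfilter ℕ, M.ncard < n :=
      Nat.hyperfilter_le_atTop (eventually_gt_atTop M.ncard)
    obtain ⟨n, hn, hlt⟩ := (hsub.and hgt).exists
    have hle : (n : ℕ∞) ≤ M.ncard :=
      (hcard n).trans ((Set.encard_le_encard hn).trans_eq hMfin.cast_ncard_eq.symm)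
    exact hlt.not_ge (Nat.cast_le.1 hle)

end AF
end

section
/- Let F = (A, R) be a finitary argumentation framework. Then F has an infinite stable extension if and only if for every natural number n there exists a stable extension of F containing at least n arguments. -/
namespace AF

variable {α : Type*}

/-!
Take an ultrafilter limit `T` of stable extensions `S n` with at least `n` arguments, along a
nonprincipal ultrafilter on `ℕ`. Finitarity makes `T` stable: if `a ∉ T` had no attacker in `T`,
then almost every `S n` would contain neither `a` nor any of its finitely many attackers. If `T`
were finite, almost every `S n` would contain it, hence equal it because stable extensions are
maximal conflict-free sets; this contradicts the growth of the `S n`.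
-/

section Ultralimit

variable {ι : Type*} {U : Ultrafilter ι} {S : ι → Set α}

/-- The limit of a family of sets along an ultrafilter, i.e. the set of points belonging to
`U`-almost every member. It serves to extract one extension from a family of extensions. -/
def ultralimit (U : Ultrafilter ι) (S : ι → Set α) : Set α :=
  {a | ∀ᶠ i in U, a ∈ S i}

theorem notMem_ultralimit {a : α} : a ∉ ultralimit U S ↔ ∀ᶠ i in U, a ∉ S i :=
  Ultrafilter.eventually_not.symm

theorem eventually_subset_of_subset_ultralimit {T : Set α} (hT : T.Finite)
    (hsub : T ⊆ ultralimit U S) : ∀ᶠ i in U, T ⊆ S i :=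
  (Filter.eventually_all_finite hT).2 hsub

theorem eventually_disjoint_of_disjoint_ultralimit {T : Set α} (hT : T.Finite)
    (hdisj : Disjoint T (ultralimit U S)) : ∀ᶠ i in U, Disjoint T (S i) := by
  simp only [Set.disjoint_left, notMem_ultralimit] at hdisj ⊢
  exact (Filter.eventually_all_finite hT).2 hdisj

end Ultralimit

theorem Stable.naive {R : α → α → Prop} {S : Set α} (hS : Stable R S) : Naive R S := by
  refine ⟨hS.1, fun T hST hT => Set.Subset.antisymm (fun a haT => ?_) hST⟩
  by_contra haS
  obtain ⟨b, hbS, hba⟩ := hS.2 a haS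
  exact hT b (hST hbS) a haT hba

section UltralimitOfExtensions

variable {ι : Type*} {U : Ultrafilter ι} {S : ι → Set α} {R : α → α → Prop}

theorem conflictFree_ultralimit (hS : ∀ᶠ i in U, ConflictFree R (S i)) :
    ConflictFree R (ultralimit U S) := by
  intro a ha b hb hab
  obtain ⟨i, hSi, hai, hbi⟩ := (hS.and (ha.and hb)).exists
  exact hSi a hai b hbi hab

theorem stable_ultralimit (hR : Finitary R) (hS : ∀ᶠ i in U, Stable R (S i)) :
    Stable R (ultralimit U S) := by
  refine ⟨conflictFree_ultralimit (hS.mono fun _ hSi => hSi.1), fun a ha => ?_⟩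
  by_contra! hunattacked
  have hattackers : ∀ᶠ i in U, Disjoint {x | R x a} (S i) :=
    eventually_disjoint_of_disjoint_ultralimit (hR a) <|
      Set.disjoint_left.2 fun b hba hb => hunattacked b hb hba
  obtain ⟨i, hSi, hai, hdisj⟩ := (hS.and ((notMem_ultralimit.1 ha).and hattackers)).exists
  obtain ⟨b, hbi, hba⟩ := hSi.2 a hai
  exact Set.disjoint_left.1 hdisj hba hbi

theorem Naive.eventually_eq_ultralimit (hT : Naive R (ultralimit U S))
    (hfin : (ultralimit U S).Finite) (hS : ∀ᶠ i in U, ConflictFree R (S i)) :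
    ∀ᶠ i in U, S i = ultralimit U S := by
  filter_upwards [eventually_subset_of_subset_ultralimit hfin subset_rfl, hS] with i hsub hSi
  exact hT.2 (S i) hsub hSi

theorem Naive.infinite_ultralimit (hT : Naive R (ultralimit U S))
    (hS : ∀ᶠ i in U, ConflictFree R (S i))
    (hcard : ∀ n : ℕ, ∀ᶠ i in U, (n : ℕ∞) ≤ (S i).encard) :
    (ultralimit U S).Infinite := by
  by_contra hfin
  rw [Set.not_infinite] at hfin
  have hle (n : ℕ) : (n : ℕ∞) ≤ (ultralimit U S).encard := by
    obtain ⟨i, hi, hn⟩ := ((hT.eventually_eq_ultralimit hfin hS).and (hcard n)).exists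
    exact hi ▸ hn
  exact hfin.encard_lt_top.ne (ENat.eq_top_iff_forall_ge.2 hle)

end UltralimitOfExtensions

theorem exists_infinite_stable_iff_arbitrarily_large
    (R : α → α → Prop) (hfin : Finitary R) :
    (∃ S : Set α, S.Infinite ∧ Stable R S) ↔
      ∀ n : ℕ, ∃ S : Set α, Stable R S ∧ (n : ℕ∞) ≤ S.encard := by
  constructor
  · rintro ⟨S, hinf, hS⟩ n
    exact ⟨S, hS, hinf.encard_eq ▸ le_top⟩
  · intro hlarge
    choose S hS hcard using hlarge
    have hlim : Stable R (ultralimit (Filter.hyperfilter ℕ) S) :=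
      stable_ultralimit hfin (.of_forall hS)
    have hgrowth (n : ℕ) : ∀ᶠ m in Filter.hyperfilter ℕ, (n : ℕ∞) ≤ (S m).encard := by
      filter_upwards [Nat.hyperfilter_le_atTop (Filter.eventually_ge_atTop n)] with m hnm
      exact (Nat.cast_le.2 hnm).trans (hcard m)
    exact ⟨_, hlim.naive.infinite_ultralimit (.of_forall fun n => (hS n).1) hgrowth, hlim⟩

end AF
end

section
/- Let F = (A, R) be an argumentation framework. Then F has exactly one naive extension if and only if the set {x ∈ A : ¬ x ↝ x} of non-self-attacking arguments is conflict-free. -/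
namespace AF

variable {α : Type*}

/-!
Every conflict-free set consists of non-self-attacking arguments and, by Zorn's lemma, extends to a
naive one. Applied to singletons, this shows that the union of all naive extensions is the set `U`
of non-self-attacking arguments. If there is only one naive extension it therefore equals `U`;
conversely, if `U` is conflict-free, it is the greatest conflict-free set, hence the only naive
extension.
-/

section

variable {R : α → α → Prop} {S : Set α}

theorem conflictFree_singleton {x : α} : ConflictFree R {x} ↔ ¬ R x x := by
  simp only [ConflictFree, Set.mem_singleton_iff, forall_eq]

theorem ConflictFree.subset_setOf_not_self (hS : ConflictFree R S) : S ⊆ {x | ¬ R x x} :=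
  fun x hx => hS x hx x hx

theorem conflictFree_sUnion_of_directedOn {c : Set (Set α)}
    (hdir : DirectedOn (· ⊆ ·) c) (hc : ∀ S ∈ c, ConflictFree R S) : ConflictFree R (⋃₀ c) := by
  rintro a ⟨S, hS, haS⟩ b ⟨T, hT, hbT⟩
  obtain ⟨U, hU, hSU, hTU⟩ := hdir S hS T hT
  exact hc U hU a (hSU haS) b (hTU hbT)

theorem naive_iff_maximal : Naive R S ↔ Maximal (ConflictFree R) S := by
  rw [maximal_subset_iff, Naive]
  exact and_congr_right fun _ =>
    ⟨fun h T hT hST => (h T hST hT).symm, fun h T hST hT => (h hT hST).symm⟩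

theorem ConflictFree.exists_naive_superset (hS : ConflictFree R S) :
    ∃ M, S ⊆ M ∧ Naive R M := by
  simp only [naive_iff_maximal]
  refine zorn_subset_nonempty {T | ConflictFree R T} (fun c hc hchain _ => ?_) S hS
  exact ⟨⋃₀ c, conflictFree_sUnion_of_directedOn hchain.directedOn hc,
    fun _ => Set.subset_sUnion_of_mem⟩

theorem sUnion_setOf_naive : ⋃₀ {S | Naive R S} = {x | ¬ R x x} := by
  apply Set.Subset.antisymm
  · exact Set.sUnion_subset fun S hS => hS.1.subset_setOf_not_self
  · intro x hx
    obtain ⟨M, hxM, hM⟩ := (conflictFree_singleton.2 hx).exists_naive_superset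
    exact ⟨M, hM, Set.singleton_subset_iff.1 hxM⟩

theorem naive_iff_eq_setOf_not_self (h : ConflictFree R {x | ¬ R x x}) :
    Naive R S ↔ S = {x | ¬ R x x} := by
  have hgreatest : IsGreatest {T | ConflictFree R T} {x | ¬ R x x} :=
    ⟨h, fun _ hT => hT.subset_setOf_not_self⟩
  exact naive_iff_maximal.trans hgreatest.maximal_iff

end

theorem unique_naive_iff
    (R : α → α → Prop) :
    (∃! S : Set α, Naive R S) ↔ ConflictFree R {x : α | ¬ R x x} := by
  constructor
  · rintro ⟨S, hS, hunique⟩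
    have hnaive : {T | Naive R T} = {S} := Set.eq_singleton_iff_unique_mem.2 ⟨hS, hunique⟩
    rw [← sUnion_setOf_naive, hnaive, Set.sUnion_singleton]
    exact hS.1
  · intro h
    simp only [naive_iff_eq_setOf_not_self h, existsUnique_eq]

end AF
end

section
/- Let F be an argumentation framework whose set of arguments is ℕ, and let D, E ⊆ ℕ. Then there exists a tree T ⊆ List ℕ such that the set of paths through T is in bijection with the set of complete extensions S of F satisfying D ⊆ S and S ∩ E = ∅. Moreover, if F is finitary, then T can be chosen to be finitely branching. -/
namespace AF

variable {α : Type*}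

/-- A tree: a set of finite strings closed under prefixes. -/
def IsTree (T : Set (List ℕ)) : Prop :=
  ∀ σ ∈ T, ∀ τ : List ℕ, τ <+: σ → τ ∈ T

/-- `π` is a path through `T`: all of its finite initial segments belong to `T`. -/
def IsPath (T : Set (List ℕ)) (π : ℕ → ℕ) : Prop :=
  ∀ n : ℕ, (List.range n).map π ∈ T

/-- `T` is finitely branching: every node has only finitely many immediate successors. -/
def FinitelyBranching (T : Set (List ℕ)) : Prop :=
  ∀ σ ∈ T, {n : ℕ | σ ++ [n] ∈ T}.Finite

/-!
Fix a well-order of the arguments and label each argument by its least attacker in `S` and its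
least attacker that `S` does not attack. The second label of `a` is empty exactly when `S` defends
`a`, so a set that equals the set of arguments it defends is recovered from its labelling as the
set of arguments with empty second label; likewise the arguments not attacked by `S` are those with
empty first label. Hence being the labelling of such a set, and the further requirements on `S`,
amount to conditions on finitely many labels at a time, and these labellings form a closed set in
the product topology. After numbering arguments and labels, a closed set of sequences is the
set of paths through the tree of its initial segments. In a finitary framework each argument has
only finitely many possible labels.
-/

open Function Topology

section PrefixTree

/-- The tree of all finite initial segments of the sequences in `C`. -/
def prefixTree (C : Set (ℕ → ℕ)) : Set (List ℕ) :=
  {σ | ∃ p ∈ C, (List.range σ.length).map p = σ}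

variable {C : Set (ℕ → ℕ)}

theorem isTree_prefixTree (C : Set (ℕ → ℕ)) : IsTree (prefixTree C) := by
  rintro σ ⟨p, hp, hσ⟩ τ hτ
  refine ⟨p, hp, ?_⟩
  calc (List.range τ.length).map p
      = ((List.range σ.length).map p).take τ.length := by
        rw [← List.map_take, List.take_range, min_eq_left hτ.length_le]
    _ = τ := by rw [hσ, ← List.prefix_iff_eq_take.1 hτ]

theorem map_range_mem_prefixTree_iff {π : ℕ → ℕ} {n : ℕ} :
    (List.range n).map π ∈ prefixTree C ↔ (PiNat.cylinder π n ∩ C).Nonempty := by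
  simp [prefixTree, Set.Nonempty, PiNat.mem_cylinder_iff, and_comm]

theorem isPath_prefixTree_iff {π : ℕ → ℕ} : IsPath (prefixTree C) π ↔ π ∈ closure C := by
  rw [(PiNat.isTopologicalBasis_cylinders fun _ ↦ ℕ).mem_closure_iff]
  constructor
  · rintro hπ _ ⟨x, n, rfl⟩ hx
    rw [← PiNat.mem_cylinder_iff_eq.1 hx]
    exact map_range_mem_prefixTree_iff.1 (hπ n)
  · exact fun hπ n ↦ map_range_mem_prefixTree_iff.2
      (hπ _ ⟨π, n, rfl⟩ (PiNat.self_mem_cylinder π n))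

theorem finitelyBranching_prefixTree (hC : ∀ n, (eval n '' C).Finite) :
    FinitelyBranching (prefixTree C) := by
  refine fun σ _ ↦ (hC σ.length).subset ?_
  rintro m ⟨p, hp, hpσ⟩
  have segment_eq : (List.range σ.length).map p = σ ∧ p σ.length = m := by
    simpa [List.range_succ] using hpσ
  exact ⟨p, hp, segment_eq.2⟩

end PrefixTree

section ClosedSets

variable {ι β : Type*}

/-- The sequence of natural numbers coding a family `c : ι → β` along numberings `f` of `ι` and
`g` of `β`, padded with zeros at the positions that number no index. -/
noncomputable def natCode (f : ι → ℕ) (g : β → ℕ) (c : ι → β) : ℕ → ℕ :=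
  extend f (g ∘ c) 0

variable {f : ι → ℕ} {g : β → ℕ}

theorem natCode_apply (hf : Injective f) (c : ι → β) (i : ι) : natCode f g c (f i) = g (c i) :=
  hf.extend_apply _ _ i

theorem natCode_apply_of_notMem_range {n : ℕ} (hn : n ∉ Set.range f) (c : ι → β) :
    natCode f g c n = 0 :=
  extend_apply' _ _ n hn

theorem isClosedEmbedding_natCode [Nonempty β] [TopologicalSpace β] [DiscreteTopology β]
    (hf : Injective f) (hg : Injective g) : IsClosedEmbedding (natCode f g) := by
  have decode : LeftInverse (fun π i ↦ invFun g (π (f i))) (natCode f g) := fun c ↦ by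
    simp only [natCode_apply hf, leftInverse_invFun hg (c _)]
  refine decode.isClosedEmbedding ?_ (continuous_pi fun n ↦ ?_)
  · exact continuous_pi fun i ↦
      (continuous_of_discreteTopology (f := invFun g)).comp (continuous_apply (f i))
  · by_cases hn : n ∈ Set.range f
    · obtain ⟨i, rfl⟩ := hn
      simp only [natCode_apply hf]
      exact continuous_of_discreteTopology.comp (continuous_apply i)
    · simp only [natCode_apply_of_notMem_range hn]
      exact continuous_const

theorem finite_eval_image_natCode_image (hf : Injective f) {C : Set (ι → β)}
    (hC : ∀ i, (eval i '' C).Finite) (n : ℕ) : (eval n '' (natCode f g '' C)).Finite := by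
  by_cases hn : n ∈ Set.range f
  · obtain ⟨i, rfl⟩ := hn
    refine ((hC i).image g).subset ?_
    rintro _ ⟨_, ⟨c, hc, rfl⟩, rfl⟩
    exact ⟨c i, ⟨c, hc, rfl⟩, (natCode_apply hf c i).symm⟩
  · refine (Set.finite_singleton 0).subset ?_
    rintro _ ⟨_, ⟨c, -, rfl⟩, rfl⟩
    exact natCode_apply_of_notMem_range hn c

theorem exists_tree_paths_equiv_of_isClosed [Countable ι] [Countable β] [Nonempty β]
    [TopologicalSpace β] [DiscreteTopology β] {C : Set (ι → β)} (hC : IsClosed C) :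
    ∃ T : Set (List ℕ), IsTree T ∧ Nonempty ({π : ℕ → ℕ // IsPath T π} ≃ C) ∧
      ((∀ i, (eval i '' C).Finite) → FinitelyBranching T) := by
  obtain ⟨f, hf⟩ := Countable.exists_injective_nat ι
  obtain ⟨g, hg⟩ := Countable.exists_injective_nat β
  have code : IsClosedEmbedding (natCode f g) := isClosedEmbedding_natCode hf hg
  have isPath_iff (π : ℕ → ℕ) :
      IsPath (prefixTree (natCode f g '' C)) π ↔ π ∈ natCode f g '' C := by
    rw [isPath_prefixTree_iff, (code.isClosedMap _ hC).closure_eq]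
  exact ⟨prefixTree (natCode f g '' C), isTree_prefixTree _,
    ⟨(Equiv.subtypeEquivRight isPath_iff).trans (Equiv.Set.image _ C code.injective).symm⟩,
    fun hfin ↦ finitelyBranching_prefixTree (finite_eval_image_natCode_image hf hfin)⟩

end ClosedSets

section MinOption

variable [LinearOrder α] [WellFoundedLT α] {s : Set α}

open Classical in
/-- The least element of a set in a well-order, or `none` if the set is empty. -/
noncomputable def minOption (s : Set α) : Option α :=
  if h : s.Nonempty then some (wellFounded_lt.min s h) else none

theorem minOption_eq_none_iff : minOption s = none ↔ s = ∅ := by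
  simp [minOption, Set.not_nonempty_iff_eq_empty]

theorem minOption_eq_some_iff {m : α} : minOption s = some m ↔ IsLeast s m := by
  have isLeast_min (h : s.Nonempty) : IsLeast s (wellFounded_lt.min s h) :=
    ⟨wellFounded_lt.min_mem s h, fun _ hx ↦ wellFounded_lt.min_le hx⟩
  constructor
  · intro hm
    obtain ⟨h, rfl⟩ : ∃ h : s.Nonempty, wellFounded_lt.min s h = m := by
      simpa [minOption] using hm
    exact isLeast_min h
  · intro hm
    rw [minOption, dif_pos hm.nonempty, (isLeast_min hm.nonempty).unique hm]

theorem minOption_mem_insert_none (s : Set α) : minOption s ∈ insert none (some '' s) := by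
  cases h : minOption s with
  | none => exact Set.mem_insert _ _
  | some m => exact Or.inr ⟨m, (minOption_eq_some_iff.1 h).1, rfl⟩

variable {X : Type*} [TopologicalSpace X] {s : X → Set α}

theorem isClosed_minOption_eq_const (hs : ∀ a, IsClopen {x | a ∈ s x}) (o : Option α) :
    IsClosed {x | minOption (s x) = o} := by
  cases o with
  | none =>
    simp only [minOption_eq_none_iff, Set.eq_empty_iff_forall_notMem, Set.ofPred_forall]
    exact isClosed_iInter fun a ↦ (hs a).compl.isClosed
  | some m =>
    simp only [minOption_eq_some_iff, IsLeast, mem_lowerBounds, Set.ofPred_and, Set.ofPred_forall]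
    exact (hs m).isClosed.inter
      (isClosed_iInter fun a ↦ isClosed_imp (hs a).isOpen isClosed_const)

theorem isClosed_minOption_eq [TopologicalSpace (Option α)] [DiscreteTopology (Option α)]
    (hs : ∀ a, IsClopen {x | a ∈ s x}) {u : X → Option α} (hu : Continuous u) :
    IsClosed {x | minOption (s x) = u x} := by
  have eq_iff (x : X) : minOption (s x) = u x ↔ ∀ o, u x = o → minOption (s x) = o := by simp
  simp only [eq_iff, Set.ofPred_forall]
  exact isClosed_iInter fun o ↦
    isClosed_imp ((isOpen_discrete {o}).preimage hu) (isClosed_minOption_eq_const hs o)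

end MinOption

section ClosedConditions

variable {X : Type*} [TopologicalSpace X] {s : X → Set α}

theorem isClosed_conflictFree (R : α → α → Prop) (hs : ∀ a, IsOpen {x | a ∈ s x}) :
    IsClosed {x | ConflictFree R (s x)} := by
  have conflictFree_iff (x : X) :
      ConflictFree R (s x) ↔ ∀ a b, a ∈ s x ∧ b ∈ s x → ¬ R a b :=
    ⟨fun h a b hab ↦ h a hab.1 b hab.2, fun h a ha b hb ↦ h a b ⟨ha, hb⟩⟩
  simp only [conflictFree_iff, Set.ofPred_forall]
  exact isClosed_iInter fun a ↦ isClosed_iInter fun b ↦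
    isClosed_imp ((hs a).inter (hs b)) isClosed_const

theorem isClosed_subset (D : Set α) (hs : ∀ a, IsClosed {x | a ∈ s x}) :
    IsClosed {x | D ⊆ s x} := by
  simp only [Set.subset_def, Set.ofPred_forall]
  exact isClosed_biInter fun a _ ↦ hs a

theorem isClosed_inter_eq_empty (E : Set α) (hs : ∀ a, IsOpen {x | a ∈ s x}) :
    IsClosed {x | s x ∩ E = ∅} := by
  simp only [← Set.disjoint_iff_inter_eq_empty, Set.disjoint_left, Set.ofPred_forall]
  exact isClosed_iInter fun a ↦ isClosed_imp (hs a) isClosed_const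

end ClosedConditions

section Labelling

/-- The arguments whose second label is empty. For the labelling `attackLabelling R S` these are
the arguments defended by `S`. -/
def accepted (c : α → Option α × Option α) : Set α :=
  {a | (c a).2 = none}

theorem isClopen_mem_accepted [TopologicalSpace (Option α)] [DiscreteTopology (Option α)] (a : α) :
    IsClopen {c : α → Option α × Option α | a ∈ accepted c} :=
  (isClopen_discrete {none}).preimage (f := fun c : α → Option α × Option α ↦ (c a).2)
    (by fun_prop)

variable [LinearOrder α] [WellFoundedLT α]

/-- Each argument `a` is labelled by the least attacker of `a` that belongs to `S` and the least
attacker of `a` that is not attacked by `S`, with `none` where there is no such attacker. -/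
noncomputable def attackLabelling (R : α → α → Prop) (S : Set α) (a : α) : Option α × Option α :=
  (minOption {x | R x a ∧ x ∈ S}, minOption {x | R x a ∧ ∀ y ∈ S, ¬ R y x})

variable {R : α → α → Prop}

theorem accepted_attackLabelling (R : α → α → Prop) (S : Set α) :
    accepted (attackLabelling R S) = {a | Defends R S a} := by
  ext a
  simp [accepted, attackLabelling, Defends, minOption_eq_none_iff, Set.eq_empty_iff_forall_notMem]

theorem attackLabelling_fst_eq_none_iff {S : Set α} {a : α} :
    (attackLabelling R S a).1 = none ↔ ∀ y ∈ S, ¬ R y a := by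
  simp [attackLabelling, minOption_eq_none_iff, Set.eq_empty_iff_forall_notMem, imp_not_comm]

theorem bijOn_accepted_fixedPoints (R : α → α → Prop) :
    Set.BijOn accepted (fixedPoints (attackLabelling R ∘ accepted))
      (fixedPoints fun S ↦ {a | Defends R S a}) := by
  simpa only [comp_def, accepted_attackLabelling] using
    bijOn_fixedPoints_comp (attackLabelling R) accepted

/-- The labellings `attackLabelling R S` of the complete extensions `S`. -/
def completeLabellings (R : α → α → Prop) : Set (α → Option α × Option α) :=
  fixedPoints (attackLabelling R ∘ accepted) ∩ {c | ConflictFree R (accepted c)}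

theorem bijOn_accepted_completeLabellings (R : α → α → Prop) :
    Set.BijOn accepted (completeLabellings R) {S | Complete R S} := by
  have complete_eq : {S | Complete R S} =
      (fixedPoints fun S ↦ {a | Defends R S a}) ∩ {S | ConflictFree R S} := by
    ext S
    simp only [Complete, Set.mem_inter_iff, mem_fixedPoints_iff, Set.mem_ofPred_eq,
      eq_comm (a := S), and_comm]
  rw [complete_eq]
  exact (bijOn_accepted_fixedPoints R).inter_mapsTo (fun _ hc ↦ hc) Set.inter_subset_right

theorem attackLabelling_accepted_eq_iff {c : α → Option α × Option α} :
    attackLabelling R (accepted c) = c ↔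
      ∀ a, minOption {x | R x a ∧ (c x).2 = none} = (c a).1 ∧
        minOption {x | R x a ∧ (c x).1 = none} = (c a).2 := by
  have of_fst (h : ∀ a, (attackLabelling R (accepted c) a).1 = (c a).1) (a : α) :
      (attackLabelling R (accepted c) a).2 = minOption {x | R x a ∧ (c x).1 = none} := by
    simp only [← h, attackLabelling_fst_eq_none_iff]
    rfl
  constructor
  · intro h a
    exact ⟨congrArg Prod.fst (congrFun h a),
      (of_fst (fun b ↦ by rw [h]) a).symm.trans (congrArg Prod.snd (congrFun h a))⟩
  · intro h
    funext a
    exact Prod.ext (h a).1 ((of_fst (fun b ↦ (h b).1) a).trans (h a).2)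

theorem finite_range_attackLabelling {a : α} (ha : {x | R x a}.Finite) :
    (Set.range fun S ↦ attackLabelling R S a).Finite := by
  have finite_labels : (insert none (some '' {x | R x a})).Finite := (ha.image some).insert none
  have mem_labels (p : α → Prop) :
      minOption {x | R x a ∧ p x} ∈ insert none (some '' {x | R x a}) :=
    Set.insert_subset_insert (Set.image_mono fun _ hx ↦ hx.1) (minOption_mem_insert_none _)
  refine (finite_labels.prod finite_labels).subset ?_
  rintro _ ⟨S, rfl⟩
  exact ⟨mem_labels _, mem_labels _⟩

variable [TopologicalSpace (Option α)] [DiscreteTopology (Option α)]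

theorem isClosed_fixedPoints_attackLabelling (R : α → α → Prop) :
    IsClosed (fixedPoints (attackLabelling R ∘ accepted)) := by
  have isClopen_attackers {u : (α → Option α × Option α) → α → Option α}
      (hu : ∀ x, Continuous fun c ↦ u c x) (a x : α) :
      IsClopen {c | x ∈ {x | R x a ∧ u c x = none}} :=
    IsClopen.inter ⟨isClosed_const, isOpen_const⟩ ((isClopen_discrete {none}).preimage (hu x))
  have isClosed_fst (a : α) : IsClosed {c : α → Option α × Option α |
      minOption {x | R x a ∧ (c x).2 = none} = (c a).1} :=
    isClosed_minOption_eq (isClopen_attackers (by fun_prop) a) (by fun_prop)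
  have isClosed_snd (a : α) : IsClosed {c : α → Option α × Option α |
      minOption {x | R x a ∧ (c x).1 = none} = (c a).2} :=
    isClosed_minOption_eq (isClopen_attackers (by fun_prop) a) (by fun_prop)
  simp only [fixedPoints, IsFixedPt, comp_apply, attackLabelling_accepted_eq_iff, Set.ofPred_forall]
  exact isClosed_iInter fun a ↦ (isClosed_fst a).inter (isClosed_snd a)

theorem isClosed_completeLabellings (R : α → α → Prop) : IsClosed (completeLabellings R) :=
  (isClosed_fixedPoints_attackLabelling R).inter
    (isClosed_conflictFree R fun a ↦ (isClopen_mem_accepted a).isOpen)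

end Labelling

theorem tree_for_complete_general [Countable α] (R : α → α → Prop) (D E : Set α) :
    ∃ T : Set (List ℕ), IsTree T ∧
      Nonempty ({π : ℕ → ℕ // IsPath T π} ≃
        {S : Set α // Complete R S ∧ D ⊆ S ∧ S ∩ E = ∅}) ∧
      (Finitary R → FinitelyBranching T) := by
  obtain ⟨_, _⟩ := exists_wellFoundedLT α
  let _ : TopologicalSpace (Option α) := ⊥
  have : DiscreteTopology (Option α) := ⟨rfl⟩
  let C := completeLabellings R ∩ accepted ⁻¹' {S | D ⊆ S ∧ S ∩ E = ∅}
  have isClosed_C : IsClosed C := (isClosed_completeLabellings R).inter <|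
    (isClosed_subset D fun a ↦ (isClopen_mem_accepted a).isClosed).inter
      (isClosed_inter_eq_empty E fun a ↦ (isClopen_mem_accepted a).isOpen)
  have bijOn_C : Set.BijOn accepted C {S | Complete R S ∧ D ⊆ S ∧ S ∩ E = ∅} :=
    (bijOn_accepted_completeLabellings R).inter_mapsTo (Set.mapsTo_preimage _ _)
      Set.inter_subset_right
  obtain ⟨T, isTree, ⟨pathsEquiv⟩, branching⟩ := exists_tree_paths_equiv_of_isClosed isClosed_C
  refine ⟨T, isTree, ⟨pathsEquiv.trans bijOn_C.equiv⟩,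
    fun hR ↦ branching fun a ↦ (finite_range_attackLabelling (hR a)).subset ?_⟩
  rintro _ ⟨c, ⟨⟨hc, -⟩, -⟩, rfl⟩
  exact ⟨accepted c, congrFun hc a⟩

theorem tree_for_complete (R : ℕ → ℕ → Prop) (D E : Set ℕ) :
    ∃ T : Set (List ℕ), IsTree T ∧
      Nonempty ({π : ℕ → ℕ // IsPath T π} ≃
        {S : Set ℕ // Complete R S ∧ D ⊆ S ∧ S ∩ E = ∅}) ∧
      (Finitary R → FinitelyBranching T) := by
  exact tree_for_complete_general R D E

end AF
end
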